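/- Let α ∈ (1,2), β < α + 1, and λ ∈ ℝ. Then ∫_0^∞ (e^{iλx} − 1 − iλx·1_{{x<1}}) · e^{β x}(e^x − 1)^{−(α+1)} dx = iλ·( ã_β + 1/(α−1) ) + Γ(−α)·( Γ(−iλ + α + 1 − β)/Γ(−iλ + 1 − β) − Γ(α + 1 − β)/Γ(1 − β) ), where ã_β = ∫_0^1 x e^{−x}(1 − e^{−(α−β)x})/(1−e^{−x})^{α+1} dx + ∫_0^1 e^{−x}(1 − x − e^{−x})/(1−e^{−x})^{α+1} dx + ∫_1^∞ e^{−x}/(1−e^{−x})^{α} dx, and Γ is the complex Gamma function (vanishing at nonpositive integers, so ratios at poles are interpreted as 0). -/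

import Mathlib

open MeasureTheory Set
open Asymptotics Filter Topology

/-!
With `t = 1 - exp (-x)`, the Lamperti stable density times `exp (z * x)` turns into the Beta
integrand `t ^ (b - 1) * (1 - t) ^ (s - 1)` with `b = -α` and `s = -z + α + 1 - β`, which is not
integrable at `t = 0`. Subtracting the second order binomial expansion of `(1 - t) ^ (s - 1)` makes
the integral converge for `-2 < re b`; as a Mellin transform it is analytic in `b`, so by the
identity theorem it equals `Γ(b) Γ(s) / Γ(b + s)` minus explicit rational terms there. Comparing
the values at `z` and at `0` leaves the Gamma ratios and `z / (α - 1)`. This amounts to compensating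
`exp (z * x) - 1` by `z * exp ((α - β) * x) * (1 - exp (-x))` rather than by `z * x * 1_{x < 1}`,
and the discrepancy of the two compensators integrates to `z * ã_β`.
-/

section BetaContinuation

open Complex

/-- The remainder of the binomial expansion of `(1 - t) ^ a` at `t = 0`, up to terms of degree
less than `n`. Subtracting the expansion regularizes the Beta integral at `t = 0`. -/
noncomputable def oneSubCpowRemainder (n : ℕ) (a : ℂ) (t : ℝ) : ℂ :=
  (1 - t) ^ a - ∑ k ∈ Finset.range n, Ring.choose a k * (-t) ^ k

theorem oneSubCpowRemainder_succ (n : ℕ) (a : ℂ) (t : ℝ) :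
    oneSubCpowRemainder (n + 1) a t =
      oneSubCpowRemainder n a t - Ring.choose a n * (-1) ^ n * t ^ n := by
  rw [oneSubCpowRemainder, oneSubCpowRemainder, Finset.sum_range_succ, neg_pow (t : ℂ) n]
  ring

theorem tendsto_neg_ofReal_nhds_zero : Tendsto (fun t : ℝ ↦ -(t : ℂ)) (𝓝 0) (𝓝 0) := by
  simpa using (by fun_prop : Continuous fun t : ℝ ↦ -(t : ℂ)).tendsto 0

theorem oneSubCpowRemainder_isBigO (n : ℕ) (a : ℂ) :
    oneSubCpowRemainder n a =O[𝓝 0] fun t : ℝ ↦ t ^ n := by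
  have taylor := one_add_cpow_hasFPowerSeriesAt_zero (a := a).isBigO_sub_partialSum_pow n
  refine isBigO_norm_right.1 <|
    (taylor.comp_tendsto tendsto_neg_ofReal_nhds_zero).congr (fun t ↦ ?_) fun t ↦ ?_
  · simp [oneSubCpowRemainder, FormalMultilinearSeries.partialSum, binomialSeries,
      FormalMultilinearSeries.coeff_ofScalars, sub_eq_add_neg, mul_comm]
  · simp

theorem hasMellin_one_sub_cpow_Ioc {b s : ℂ} (hb : 0 < b.re) (hs : 0 < s.re) :
    HasMellin (indicator (Ioc 0 1) fun t : ℝ ↦ (1 - t : ℂ) ^ (s - 1)) b (betaIntegral b s) := by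
  have integrand : (fun t : ℝ ↦ (t : ℂ) ^ (b - 1) •
      indicator (Ioc 0 1) (fun t : ℝ ↦ (1 - t : ℂ) ^ (s - 1)) t) =
      indicator (Ioc 0 1) fun t : ℝ ↦ (t : ℂ) ^ (b - 1) * (1 - t) ^ (s - 1) := by
    ext t
    simp only [indicator_apply, smul_eq_mul, mul_ite, mul_zero]
  constructor
  · rw [MellinConvergent, integrand]
    exact ((intervalIntegrable_iff_integrableOn_Ioc_of_le zero_le_one).1
      (betaIntegral_convergent hb hs)).integrable_indicator measurableSet_Ioc |>.integrableOn
  · rw [mellin, integrand, setIntegral_indicator measurableSet_Ioc,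
      inter_eq_right.2 Ioc_subset_Ioi_self, betaIntegral,
      intervalIntegral.integral_of_le zero_le_one]

theorem hasMellin_oneSubCpowRemainder_of_re_pos (n : ℕ) {b s : ℂ} (hb : 0 < b.re)
    (hs : 0 < s.re) :
    HasMellin (indicator (Ioc 0 1) (oneSubCpowRemainder n (s - 1))) b
      (betaIntegral b s -
        ∑ k ∈ Finset.range n, Ring.choose (s - 1) k * (-1) ^ k / (b + k)) := by
  induction n with
  | zero =>
    have h : oneSubCpowRemainder 0 (s - 1) = fun t : ℝ ↦ (1 - t : ℂ) ^ (s - 1) := by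
      ext t
      simp [oneSubCpowRemainder]
    simpa [h] using hasMellin_one_sub_cpow_Ioc hb hs
  | succ n ih =>
    obtain ⟨pow_convergent, mellin_pow⟩ :=
      hasMellin_cpow_Ioc (n : ℂ) (s := b) (by rw [natCast_re]; positivity)
    set c := Ring.choose (s - 1) n * (-1) ^ n
    obtain ⟨cpow_convergent, mellin_cpow⟩ := hasMellin_const_smul pow_convergent c
    have h := hasMellin_sub ih.1 cpow_convergent
    rw [ih.2, mellin_cpow, mellin_pow] at h
    convert! h using 1
    · ext t
      simp only [indicator_apply, oneSubCpowRemainder_succ, cpow_natCast]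
      split_ifs <;> simp [c]
    · rw [Finset.sum_range_succ, smul_eq_mul, mul_one_div, sub_sub]

theorem locallyIntegrableOn_oneSubCpowRemainder (n : ℕ) {s : ℂ} (hs : 0 < s.re) :
    LocallyIntegrableOn (indicator (Ioc 0 1) (oneSubCpowRemainder n (s - 1))) (Ioi 0) := by
  have h := (hasMellin_oneSubCpowRemainder_of_re_pos n (b := 1) (by simp) hs).1
  simp only [MellinConvergent, sub_self, cpow_zero, one_smul] at h
  exact h.locallyIntegrableOn

theorem oneSubCpowRemainder_indicator_isBigO_atTop (n : ℕ) (a : ℂ) (r : ℝ) :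
    indicator (Ioc 0 1) (oneSubCpowRemainder n a) =O[atTop] fun t : ℝ ↦ t ^ r := by
  refine (isBigO_zero _ _).congr' ?_ EventuallyEq.rfl
  filter_upwards [eventually_gt_atTop 1] with t ht
  simp [ht.not_ge]

-- The exponent is written `-(-n)` to match the hypothesis `f =O[𝓝[>] 0] (· ^ (-b))` of the Mellin
-- transform criteria.
theorem oneSubCpowRemainder_indicator_isBigO_zero (n : ℕ) (a : ℂ) :
    indicator (Ioc 0 1) (oneSubCpowRemainder n a) =O[𝓝[>] 0] fun t : ℝ ↦ t ^ (-(-n : ℝ)) := by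
  refine ((oneSubCpowRemainder_isBigO n a).mono nhdsWithin_le_nhds).congr' ?_ ?_
  · filter_upwards [Ioc_mem_nhdsGT one_pos] with t ht
    rw [indicator_of_mem ht]
  · filter_upwards with t
    rw [neg_neg, Real.rpow_natCast]

theorem mellinConvergent_oneSubCpowRemainder {n : ℕ} {b s : ℂ} (hb : -n < b.re) (hs : 0 < s.re) :
    MellinConvergent (indicator (Ioc 0 1) (oneSubCpowRemainder n (s - 1))) b :=
  mellinConvergent_of_isBigO_rpow (locallyIntegrableOn_oneSubCpowRemainder n hs)
    (oneSubCpowRemainder_indicator_isBigO_atTop n _ _) (lt_add_one b.re)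
    (oneSubCpowRemainder_indicator_isBigO_zero n _) hb

theorem differentiableAt_mellin_oneSubCpowRemainder {n : ℕ} {b s : ℂ} (hb : -n < b.re)
    (hs : 0 < s.re) :
    DifferentiableAt ℂ (mellin (indicator (Ioc 0 1) (oneSubCpowRemainder n (s - 1)))) b :=
  mellin_differentiableAt_of_isBigO_rpow (locallyIntegrableOn_oneSubCpowRemainder n hs)
    (oneSubCpowRemainder_indicator_isBigO_atTop n _ _) (lt_add_one b.re)
    (oneSubCpowRemainder_indicator_isBigO_zero n _) hb

theorem betaIntegral_eq_Gamma_mul_Gamma_div_Gamma {b s : ℂ} (hb : 0 < b.re) (hs : 0 < s.re) :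
    betaIntegral b s = Gamma b * (Gamma s / Gamma (b + s)) := by
  have h : Gamma (b + s) ≠ 0 := Gamma_ne_zero_of_re_pos (by rw [add_re]; positivity)
  rw [← mul_div_assoc, Gamma_mul_Gamma_eq_betaIntegral hb hs, mul_div_cancel_left₀ _ h]

theorem differentiableAt_Gamma_add_natCast {n : ℕ} {b : ℂ} (hb : -n < b.re) :
    DifferentiableAt ℂ (fun b ↦ Gamma (b + n)) b := by
  refine (differentiableAt_Gamma _ fun m hm ↦ ?_).comp b (by fun_prop)
  have := congrArg re hm
  simp only [add_re, natCast_re, neg_re] at this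
  linarith [m.cast_nonneg (α := ℝ)]

theorem differentiable_inv_Gamma_add (s : ℂ) : Differentiable ℂ fun b ↦ (Gamma (b + s))⁻¹ :=
  differentiable_one_div_Gamma.comp (by fun_prop : Differentiable ℂ (· + s))

theorem prod_add_natCast_mul_Gamma {n : ℕ} {b : ℂ} (hb : ∀ k < n, b + k ≠ 0) :
    (∏ k ∈ Finset.range n, (b + k)) * Gamma b = Gamma (b + n) := by
  induction n with
  | zero => simp
  | succ n ih =>
    rw [Finset.prod_range_succ, mul_right_comm, ih fun k hk ↦ hb k (hk.trans n.lt_succ_self),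
      mul_comm, ← Gamma_add_one _ (hb n n.lt_succ_self)]
    push_cast
    ring_nf

theorem prod_mul_sum_div {ι K : Type*} [Field K] [DecidableEq ι] {u : Finset ι} {c d : ι → K}
    (hd : ∀ i ∈ u, d i ≠ 0) :
    (∏ i ∈ u, d i) * ∑ i ∈ u, c i / d i = ∑ i ∈ u, c i * ∏ j ∈ u.erase i, d j := by
  rw [Finset.mul_sum]
  refine Finset.sum_congr rfl fun i hi ↦ ?_
  rw [← Finset.mul_prod_erase u d hi]
  field_simp [hd i hi]

-- Multiplying by `∏ (b + k)` clears the poles of both sides, so the identity theorem applies on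
-- the whole half-plane.
theorem prod_add_natCast_mul_mellin_oneSubCpowRemainder {n : ℕ} {b s : ℂ} (hb : -n < b.re)
    (hs : 0 < s.re) :
    (∏ k ∈ Finset.range n, (b + k)) *
        mellin (indicator (Ioc 0 1) (oneSubCpowRemainder n (s - 1))) b =
      Gamma (b + n) * (Gamma s / Gamma (b + s)) -
        ∑ k ∈ Finset.range n, Ring.choose (s - 1) k * (-1) ^ k *
          ∏ j ∈ (Finset.range n).erase k, (b + j) := by
  set U : Set ℂ := {b | -n < b.re}
  have isOpen_U : IsOpen U := isOpen_lt continuous_const continuous_re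
  have lhs_diff : DifferentiableOn ℂ (fun b : ℂ ↦ (∏ k ∈ Finset.range n, (b + k)) *
      mellin (indicator (Ioc 0 1) (oneSubCpowRemainder n (s - 1))) b) U := fun w hw ↦
    ((by fun_prop : DifferentiableAt ℂ (fun b : ℂ ↦ ∏ k ∈ Finset.range n, (b + (k : ℂ))) w).mul
      (differentiableAt_mellin_oneSubCpowRemainder hw hs)).differentiableWithinAt
  have rhs_diff : DifferentiableOn ℂ (fun b : ℂ ↦ Gamma (b + n) * (Gamma s / Gamma (b + s)) -
      ∑ k ∈ Finset.range n, Ring.choose (s - 1) k * (-1) ^ k *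
        ∏ j ∈ (Finset.range n).erase k, (b + j)) U := fun w hw ↦ by
    have gamma_diff := differentiableAt_Gamma_add_natCast hw
    have gamma_inv_diff := (differentiable_inv_Gamma_add s).differentiableAt (x := w)
    simp only [div_eq_mul_inv]
    exact DifferentiableAt.differentiableWithinAt (by fun_prop)
  refine (lhs_diff.analyticOnNhd isOpen_U).eqOn_of_preconnected_of_eventuallyEq
    (rhs_diff.analyticOnNhd isOpen_U) (convex_halfSpace_re_gt _).isPreconnected
    (z₀ := 1) (show -(n : ℝ) < (1 : ℂ).re by rw [one_re]; linarith [n.cast_nonneg (α := ℝ)]) ?_ hb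
  filter_upwards [(isOpen_lt continuous_const continuous_re).mem_nhds
    (show (0 : ℝ) < (1 : ℂ).re by simp)] with w (hw : 0 < w.re)
  have add_natCast_ne_zero (k : ℕ) : w + k ≠ 0 :=
    ne_of_apply_ne re (by rw [add_re, natCast_re, zero_re]; positivity)
  rw [(hasMellin_oneSubCpowRemainder_of_re_pos n hw hs).2,
    betaIntegral_eq_Gamma_mul_Gamma_div_Gamma hw hs, mul_sub,
    prod_mul_sum_div fun k _ ↦ add_natCast_ne_zero k, ← mul_assoc,
    prod_add_natCast_mul_Gamma fun k _ ↦ add_natCast_ne_zero k]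

theorem hasMellin_oneSubCpowRemainder {n : ℕ} {b s : ℂ} (hb : -n < b.re)
    (hb' : ∀ k < n, b + k ≠ 0) (hs : 0 < s.re) :
    HasMellin (indicator (Ioc 0 1) (oneSubCpowRemainder n (s - 1))) b
      (Gamma b * (Gamma s / Gamma (b + s)) -
        ∑ k ∈ Finset.range n, Ring.choose (s - 1) k * (-1) ^ k / (b + k)) := by
  refine ⟨mellinConvergent_oneSubCpowRemainder hb hs, ?_⟩
  have hb_range : ∀ k ∈ Finset.range n, b + k ≠ 0 := fun k hk ↦ hb' k (Finset.mem_range.1 hk)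
  refine mul_left_cancel₀ (Finset.prod_ne_zero_iff.2 hb_range) ?_
  rw [prod_add_natCast_mul_mellin_oneSubCpowRemainder hb hs, mul_sub, prod_mul_sum_div hb_range,
    ← mul_assoc, prod_add_natCast_mul_Gamma hb']

end BetaContinuation

section Substitution

theorem one_sub_exp_neg_pos {x : ℝ} (hx : 0 < x) : 0 < 1 - Real.exp (-x) :=
  sub_pos.2 (Real.exp_lt_one_iff.2 (neg_lt_zero.2 hx))

theorem image_one_sub_exp_neg_Ioi : (fun x : ℝ ↦ 1 - Real.exp (-x)) '' Ioi 0 = Ioo 0 1 := by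
  ext t
  constructor
  · rintro ⟨x, hx : 0 < x, rfl⟩
    exact ⟨one_sub_exp_neg_pos hx, sub_lt_self 1 (Real.exp_pos _)⟩
  · rintro ⟨ht₀, ht₁⟩
    refine ⟨-Real.log (1 - t), neg_pos.2 (Real.log_neg (by linarith) (by linarith)), ?_⟩
    simp only [neg_neg, Real.exp_log (sub_pos.2 ht₁), sub_sub_cancel]

theorem hasMellin_indicator_Ioc_iff {E : Type*} [NormedAddCommGroup E] [NormedSpace ℂ E]
    {f : ℝ → E} {b : ℂ} {m : E} :
    HasMellin (indicator (Ioc 0 1) f) b m ↔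
      IntegrableOn (fun x : ℝ ↦ Real.exp (-x) •
          ((1 - Real.exp (-x) : ℝ) : ℂ) ^ (b - 1) • f (1 - Real.exp (-x))) (Ioi 0) ∧
        ∫ x in Ioi (0 : ℝ), Real.exp (-x) •
          ((1 - Real.exp (-x) : ℝ) : ℂ) ^ (b - 1) • f (1 - Real.exp (-x)) = m := by
  have monotone : Monotone fun x : ℝ ↦ 1 - Real.exp (-x) := fun x y hxy ↦ by dsimp only; gcongr
  have hasDeriv (x : ℝ) : HasDerivAt (fun x : ℝ ↦ 1 - Real.exp (-x)) (Real.exp (-x)) x := by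
    simpa using ((hasDerivAt_neg x).exp).const_sub 1
  have integrand : (fun t : ℝ ↦ (t : ℂ) ^ (b - 1) • indicator (Ioc 0 1) f t) =
      indicator (Ioc 0 1) fun t : ℝ ↦ (t : ℂ) ^ (b - 1) • f t :=
    (indicator_smul _ _ _).symm
  rw [HasMellin, MellinConvergent, mellin, integrand, integrableOn_indicator_iff measurableSet_Ioc,
    setIntegral_indicator measurableSet_Ioc, inter_eq_left.2 Ioc_subset_Ioi_self,
    inter_eq_right.2 Ioc_subset_Ioi_self, integral_Ioc_eq_integral_Ioo,
    integrableOn_Ioc_iff_integrableOn_Ioo, ← image_one_sub_exp_neg_Ioi,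
    integrableOn_image_iff_integrableOn_deriv_smul_of_monotoneOn measurableSet_Ioi
      (fun x _ ↦ (hasDeriv x).hasDerivWithinAt) (monotone.monotoneOn _),
    integral_image_eq_integral_deriv_smul_of_monotoneOn measurableSet_Ioi
      (fun x _ ↦ (hasDeriv x).hasDerivWithinAt) (monotone.monotoneOn _)]

end Substitution

section ExponentialIntegrals

open Complex

theorem exp_ofReal_cpow (x : ℝ) (p : ℂ) : exp x ^ p = exp (p * x) := by
  rw [← ofReal_exp, cpow_def_of_ne_zero (ofReal_ne_zero.2 (Real.exp_ne_zero x)),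
    ← ofReal_log (Real.exp_pos x).le, Real.log_exp, mul_comm]

/-- The remainder `oneSubCpowRemainder 2 (s - 1)` in the variable `x`, where `t = 1 - exp (-x)`,
multiplied by the Jacobian `exp (-x)`. -/
noncomputable def expRemainder (s : ℂ) (x : ℝ) : ℂ :=
  exp (-s * x) - exp (-x) * (1 - (s - 1) * (1 - exp (-x)))

theorem exp_neg_mul_oneSubCpowRemainder_two (s : ℂ) (x : ℝ) :
    exp (-x) * oneSubCpowRemainder 2 (s - 1) (1 - Real.exp (-x)) = expRemainder s x := by
  have exp_mul : exp (-x) * exp (-x) ^ (s - 1) = exp (-s * x) := by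
    rw [← ofReal_neg, exp_ofReal_cpow, ← exp_add]
    push_cast
    ring_nf
  simp only [oneSubCpowRemainder, expRemainder, Finset.sum_range_succ, Finset.sum_range_zero,
    Ring.choose_zero_right, Ring.choose_one_right, pow_zero, pow_one, ofReal_sub, ofReal_one,
    ofReal_exp, ofReal_neg, sub_sub_cancel, ← exp_mul]
  ring

theorem integrableOn_and_integral_expRemainder {b s : ℂ} (hb : -2 < b.re) (hb₀ : b ≠ 0)
    (hb₁ : b ≠ -1) (hs : 0 < s.re) :
    IntegrableOn (fun x : ℝ ↦ expRemainder s x * (1 - exp (-x)) ^ (b - 1)) (Ioi 0) ∧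
      ∫ x in Ioi (0 : ℝ), expRemainder s x * (1 - exp (-x)) ^ (b - 1) =
        Gamma b * (Gamma s / Gamma (b + s)) - 1 / b + (s - 1) / (b + 1) := by
  have hb' : ∀ k < 2, b + (k : ℕ) ≠ 0 := fun k hk ↦ by
    interval_cases k
    · simpa using hb₀
    · simpa [← eq_neg_iff_add_eq_zero] using hb₁
  have integrand (x : ℝ) : expRemainder s x * (1 - exp (-x)) ^ (b - 1) = Real.exp (-x) •
      ((1 - Real.exp (-x) : ℝ) : ℂ) ^ (b - 1) •
        oneSubCpowRemainder 2 (s - 1) (1 - Real.exp (-x)) := by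
    rw [← exp_neg_mul_oneSubCpowRemainder_two, real_smul, smul_eq_mul]
    push_cast
    ring
  have value : Gamma b * (Gamma s / Gamma (b + s)) - 1 / b + (s - 1) / (b + 1) =
      Gamma b * (Gamma s / Gamma (b + s)) -
        ∑ k ∈ Finset.range 2, Ring.choose (s - 1) k * (-1) ^ k / (b + k) := by
    simp only [Finset.sum_range_succ, Finset.sum_range_zero, Ring.choose_zero_right,
      Ring.choose_one_right, Nat.cast_zero, Nat.cast_one]
    ring
  simp only [integrand, value]
  exact hasMellin_indicator_Ioc_iff.1 (hasMellin_oneSubCpowRemainder (mod_cast hb) hb' hs)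

end ExponentialIntegrals

section Compensator

open Complex

theorem one_sub_exp_neg_ne_zero {x : ℝ} (hx : 0 < x) : (1 - exp (-x) : ℂ) ≠ 0 := by
  exact_mod_cast (one_sub_exp_neg_pos hx).ne'

theorem continuousOn_one_sub_exp_neg_cpow (p : ℂ) :
    ContinuousOn (fun x : ℝ ↦ (1 - exp (-x) : ℂ) ^ p) (Ioi 0) := by
  refine ContinuousOn.cpow_const (by fun_prop) fun x (hx : 0 < x) ↦ Or.inl ?_
  exact_mod_cast one_sub_exp_neg_pos hx

theorem one_sub_exp_neg_isEquivalent : (fun x : ℝ ↦ 1 - Real.exp (-x)) ~[𝓝 0] fun x ↦ x := by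
  have hasDeriv : HasDerivAt (fun x : ℝ ↦ 1 - Real.exp (-x)) 1 0 := by
    simpa using ((hasDerivAt_neg (0 : ℝ)).exp).const_sub 1
  simpa [IsEquivalent, Pi.sub_def] using hasDeriv.isLittleO

theorem one_sub_exp_neg_cpow_isBigO (p : ℂ) :
    (fun x : ℝ ↦ (1 - exp (-x) : ℂ) ^ p) =O[𝓝[>] 0] fun x ↦ x ^ p.re := by
  have pos : ∀ᶠ x : ℝ in 𝓝[>] 0, 0 < x := self_mem_nhdsWithin
  refine (isTheta_cpow_const_rpow fun _ _ ↦ pos.mono fun x ↦ one_sub_exp_neg_ne_zero).1.trans ?_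
  refine ((one_sub_exp_neg_isEquivalent.isTheta.mono nhdsWithin_le_nhds).rpow (r := p.re)
    (pos.mono fun x hx ↦ (one_sub_exp_neg_pos hx).le) (pos.mono fun x ↦ le_of_lt)).1.congr' ?_ .rfl
  filter_upwards [pos] with x hx
  rw [← ofReal_neg, ← ofReal_exp, ← ofReal_one, ← ofReal_sub, norm_real,
    Real.norm_of_nonneg (one_sub_exp_neg_pos hx).le]

theorem integrableOn_Ioc_of_isBigO_rpow {E : Type*} [NormedAddCommGroup E] {f : ℝ → E} {b r : ℝ}
    (hf : ContinuousOn f (Ioc 0 b)) (hO : f =O[𝓝[>] 0] fun x ↦ x ^ r) (hr : -1 < r) :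
    IntegrableOn f (Ioc 0 b) := by
  rcases le_or_gt b 0 with hb | hb
  · simp [Ioc_eq_empty hb.not_gt]
  have measurable : StronglyMeasurableAtFilter f (𝓝[>] 0) :=
    ⟨Ioc 0 b, Ioc_mem_nhdsGT hb, hf.aestronglyMeasurable measurableSet_Ioc⟩
  have rpow : IntegrableAtFilter (fun x : ℝ ↦ x ^ r) (𝓝[>] 0) :=
    ⟨Ioc 0 b, Ioc_mem_nhdsGT hb, (intervalIntegrable_iff_integrableOn_Ioc_of_le hb.le).1
      (intervalIntegral.intervalIntegrable_rpow' hr)⟩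
  obtain ⟨u, hu, integrable⟩ := hO.integrableAtFilter measurable rpow
  obtain ⟨c, hc : 0 < c, hcu⟩ := mem_nhdsGT_iff_exists_Ioc_subset.1 hu
  have compact : IntegrableOn f (Icc c b) :=
    (hf.mono fun x hx ↦ ⟨hc.trans_le hx.1, hx.2⟩).integrableOn_Icc
  refine ((integrable.mono_set hcu).union compact).mono_set fun x hx ↦ ?_
  exact (le_total x c).imp (fun h ↦ ⟨hx.1, h⟩) fun h ↦ ⟨h, hx.2⟩

theorem integrableOn_Ioc_mul_one_sub_exp_neg_cpow {f : ℝ → ℂ} {p : ℂ} {b : ℝ} {n : ℕ}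
    (hf : Continuous f) (hO : f =O[𝓝 0] fun x ↦ x ^ n) (hp : -1 < n + p.re) :
    IntegrableOn (fun x : ℝ ↦ f x * (1 - exp (-x)) ^ p) (Ioc 0 b) := by
  refine integrableOn_Ioc_of_isBigO_rpow (hf.continuousOn.mul
    ((continuousOn_one_sub_exp_neg_cpow p).mono Ioc_subset_Ioi_self))
    (((hO.mono nhdsWithin_le_nhds).mul (one_sub_exp_neg_cpow_isBigO p)).congr' .rfl ?_) hp
  filter_upwards [self_mem_nhdsWithin] with x (hx : 0 < x)
  rw [Real.rpow_add hx, Real.rpow_natCast]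

theorem integrableOn_Ici_exp_neg_mul_one_sub_exp_neg_cpow (p : ℂ) :
    IntegrableOn (fun x : ℝ ↦ exp (-x) * (1 - exp (-x)) ^ p) (Ici 1) := by
  have continuousOn : ContinuousOn (fun x : ℝ ↦ exp (-x) * (1 - exp (-x)) ^ p) (Ici 1) :=
    ContinuousOn.mul (by fun_prop)
      ((continuousOn_one_sub_exp_neg_cpow p).mono (Ici_subset_Ioi.2 one_pos))
  have isBigO : (fun x : ℝ ↦ exp (-x) * (1 - exp (-x)) ^ p) =O[atTop]
      fun x ↦ Real.exp (-1 * x) := by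
    have exp_tendsto : Tendsto (fun x : ℝ ↦ exp (-x)) atTop (𝓝 0) := by
      exact_mod_cast (continuous_ofReal.tendsto 0).comp Real.tendsto_exp_neg_atTop_nhds_zero
    have base_tendsto : Tendsto (fun x : ℝ ↦ (1 - exp (-x)) ^ p) atTop (𝓝 1) := by
      have cpow_continuousAt : ContinuousAt (· ^ p) (1 - 0 : ℂ) :=
        continuousAt_cpow_const (by simp)
      simpa [Function.comp_def] using cpow_continuousAt.tendsto.comp (exp_tendsto.const_sub 1)
    have exp_isBigO : (fun x : ℝ ↦ exp (-x)) =O[atTop] fun x ↦ Real.exp (-1 * x) :=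
      isBigO_of_le _ fun x ↦ by simp [norm_exp]
    simpa using exp_isBigO.mul (base_tendsto.isBigO_one ℝ)
  exact (continuousOn.locallyIntegrableOn measurableSet_Ici).integrableOn_of_isBigO_atTop isBigO
    ⟨Ioi 1, Ioi_mem_atTop 1, exp_neg_integrableOn_Ioi 1 one_pos⟩

end Compensator

section LampertiStable

open Complex

variable {α β : ℂ}

theorem exp_neg_isBigO_one : (fun x : ℝ ↦ exp (-x)) =O[𝓝 0] fun _ ↦ (1 : ℝ) :=
  ((by fun_prop : Continuous fun x : ℝ ↦ exp (-x)).tendsto 0).isBigO_one ℝ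

theorem one_sub_exp_mul_isBigO (c : ℂ) : (fun x : ℝ ↦ 1 - exp (c * x)) =O[𝓝 0] fun x ↦ x := by
  have hasDeriv : HasDerivAt (fun x : ℝ ↦ 1 - exp (c * x)) (-c) 0 := by
    simpa using (((hasDerivAt_id (0 : ℂ)).const_mul c).cexp.comp_ofReal).const_sub 1
  simpa using hasDeriv.isBigO_sub

theorem one_sub_sub_exp_neg_isBigO : (fun x : ℝ ↦ 1 - x - exp (-x)) =O[𝓝 0] fun x ↦ x ^ 2 := by
  have taylor := (exp_sub_sum_range_isBigO_pow 2).comp_tendsto tendsto_neg_ofReal_nhds_zero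
  refine isBigO_norm_right.1 <| taylor.norm_right.neg_left.congr (fun x ↦ ?_) fun x ↦ ?_
  · simp [Finset.sum_range_succ, sub_eq_add_neg]
  · simp

theorem integrableOn_Ioc_div_one_sub_exp_neg_cpow {f : ℝ → ℂ} (hα : α.re < 2)
    (hf : Continuous f) (hO : f =O[𝓝 0] fun x ↦ x ^ 2) :
    IntegrableOn (fun x : ℝ ↦ f x / (1 - exp (-x)) ^ (α + 1)) (Ioc 0 1) := by
  simp only [div_eq_mul_inv, ← cpow_neg]
  refine integrableOn_Ioc_mul_one_sub_exp_neg_cpow hf hO ?_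
  rw [neg_re, add_re, one_re]
  push_cast
  linarith

theorem integrableOn_Ioc_mul_exp_neg_mul_div (hα : α.re < 2) (c : ℂ) :
    IntegrableOn (fun x : ℝ ↦ x * exp (-x) * (1 - exp (c * x)) / (1 - exp (-x)) ^ (α + 1))
      (Ioc 0 1) := by
  refine integrableOn_Ioc_div_one_sub_exp_neg_cpow hα (by fun_prop) ?_
  have id_isBigO : (fun x : ℝ ↦ (x : ℂ)) =O[𝓝 0] fun x ↦ x := isBigO_of_le _ fun x ↦ by simp
  simpa [sq] using (id_isBigO.mul exp_neg_isBigO_one).mul (one_sub_exp_mul_isBigO c)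

theorem integrableOn_Ioc_exp_neg_mul_div (hα : α.re < 2) :
    IntegrableOn (fun x : ℝ ↦ exp (-x) * (1 - x - exp (-x)) / (1 - exp (-x)) ^ (α + 1))
      (Ioc 0 1) := by
  refine integrableOn_Ioc_div_one_sub_exp_neg_cpow hα (by fun_prop) ?_
  simpa using exp_neg_isBigO_one.mul one_sub_sub_exp_neg_isBigO

/-- The constant `ã_β` of the characteristic exponent of a Lamperti stable process with
characteristics `(α, β)`, for complex parameters. -/
noncomputable def lampertiDrift (α β : ℂ) : ℂ :=
  (∫ x in (0 : ℝ)..1, x * exp (-x) * (1 - exp (-(α - β) * x)) / (1 - exp (-x)) ^ (α + 1)) +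
    (∫ x in (0 : ℝ)..1, exp (-x) * (1 - x - exp (-x)) / (1 - exp (-x)) ^ (α + 1)) +
      ∫ x in Ioi (1 : ℝ), exp (-x) / (1 - exp (-x)) ^ α

/-- The density on `(0, ∞)` of the positive-jump part of the Lévy measure of a Lamperti stable
process with characteristics `(α, β)`, for complex parameters. -/
noncomputable def lampertiStableDensity (α β : ℂ) (x : ℝ) : ℂ :=
  exp (β * x) * (exp x - 1) ^ (-(α + 1))

/-- The difference between the compensators `exp ((α - β) * x) * (1 - exp (-x))`, coming from the
Beta integral, and `x * 1_{x < 1}`, multiplied by the density `lampertiStableDensity α β x`. -/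
noncomputable def compensatorDefect (α β : ℂ) (x : ℝ) : ℂ :=
  (exp (-x) * (1 - exp (-x)) - x * (if x < 1 then 1 else 0) * exp (-(α + 1 - β) * x)) *
    (1 - exp (-x)) ^ (-(α + 1))

theorem compensatorDefect_of_lt_one {x : ℝ} (hx : x < 1) :
    compensatorDefect α β x =
      x * exp (-x) * (1 - exp (-(α - β) * x)) / (1 - exp (-x)) ^ (α + 1) +
        exp (-x) * (1 - x - exp (-x)) / (1 - exp (-x)) ^ (α + 1) := by
  have exp_mul : exp (-(α + 1 - β) * x) = exp (-x) * exp (-(α - β) * x) := by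
    rw [← exp_add]
    ring_nf
  rw [compensatorDefect, if_pos hx, exp_mul, cpow_neg]
  ring

theorem compensatorDefect_of_one_le {x : ℝ} (hx : 1 ≤ x) :
    compensatorDefect α β x = exp (-x) / (1 - exp (-x)) ^ α := by
  have base_ne_zero := one_sub_exp_neg_ne_zero (one_pos.trans_le hx)
  rw [compensatorDefect, if_neg hx.not_gt, cpow_neg, cpow_add _ _ base_ne_zero, cpow_one]
  field_simp
  ring

theorem integrableOn_Ioo_compensatorDefect (hα : α.re < 2) :
    IntegrableOn (compensatorDefect α β) (Ioo 0 1) :=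
  (((integrableOn_Ioc_mul_exp_neg_mul_div hα _).add (integrableOn_Ioc_exp_neg_mul_div hα)).mono_set
    Ioo_subset_Ioc_self).congr_fun (fun _ hx ↦ (compensatorDefect_of_lt_one hx.2).symm)
      measurableSet_Ioo

theorem integrableOn_Ici_compensatorDefect :
    IntegrableOn (compensatorDefect α β) (Ici 1) := by
  refine (integrableOn_Ici_exp_neg_mul_one_sub_exp_neg_cpow (-α)).congr_fun
    (fun x hx ↦ ?_) measurableSet_Ici
  simp only [compensatorDefect_of_one_le hx, cpow_neg, div_eq_mul_inv]

theorem integrableOn_compensatorDefect (hα : α.re < 2) :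
    IntegrableOn (compensatorDefect α β) (Ioi 0) := by
  rw [← Ioo_union_Ici_eq_Ioi one_pos]
  exact (integrableOn_Ioo_compensatorDefect hα).union integrableOn_Ici_compensatorDefect

theorem integral_compensatorDefect (hα : α.re < 2) :
    ∫ x in Ioi (0 : ℝ), compensatorDefect α β x = lampertiDrift α β := by
  rw [← Ioo_union_Ici_eq_Ioi one_pos,
    setIntegral_union (disjoint_left.2 fun x hx hx' ↦ hx.2.not_ge hx') measurableSet_Ici
      (integrableOn_Ioo_compensatorDefect hα) integrableOn_Ici_compensatorDefect,
    setIntegral_congr_fun measurableSet_Ioo fun x hx ↦ compensatorDefect_of_lt_one hx.2,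
    setIntegral_congr_fun measurableSet_Ici fun x hx ↦ compensatorDefect_of_one_le hx,
    integral_Ici_eq_integral_Ioi, ← integral_Ioc_eq_integral_Ioo,
    integral_add (integrableOn_Ioc_mul_exp_neg_mul_div hα _) (integrableOn_Ioc_exp_neg_mul_div hα),
    lampertiDrift, intervalIntegral.integral_of_le zero_le_one,
    intervalIntegral.integral_of_le zero_le_one]

theorem lampertiStableDensity_eq_exp_mul_cpow {x : ℝ} (hx : 0 < x) :
    lampertiStableDensity α β x =
      exp (-(α + 1 - β) * x) * (1 - exp (-x)) ^ (-(α + 1)) := by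
  have base : exp x - 1 = (Real.exp x : ℂ) * ((1 - Real.exp (-x) : ℝ) : ℂ) := by
    push_cast
    rw [mul_sub, ← exp_add, add_neg_cancel, exp_zero, mul_one]
  rw [lampertiStableDensity, base, mul_cpow_ofReal_nonneg (Real.exp_pos x).le
    (one_sub_exp_neg_pos hx).le, ofReal_exp, exp_ofReal_cpow, ← mul_assoc, ← exp_add]
  push_cast
  ring_nf

theorem compensated_exp_mul_lampertiStableDensity (z : ℂ) {x : ℝ} (hx : 0 < x) :
    (exp (z * x) - 1 - z * x * (if x < 1 then 1 else 0)) * lampertiStableDensity α β x =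
      expRemainder (-z + α + 1 - β) x * (1 - exp (-x)) ^ (-α - 1) -
        expRemainder (α + 1 - β) x * (1 - exp (-x)) ^ (-α - 1) + z * compensatorDefect α β x := by
  have exp_mul : exp (z * x) * exp (-(α + 1 - β) * x) = exp (-(-z + α + 1 - β) * x) := by
    rw [← exp_add]
    ring_nf
  rw [lampertiStableDensity_eq_exp_mul_cpow hx, expRemainder, expRemainder, compensatorDefect,
    ← exp_mul, neg_add']
  ring

theorem lamperti_stable_characteristic_exponent_large_index_general {α β z : ℂ} (hα : α.re < 2)
    (hα₀ : α ≠ 0) (hα₁ : α ≠ 1) (hβ : β.re < α.re + 1) (hz : z.re + β.re < α.re + 1) :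
    ∫ x in Ioi (0 : ℝ), (exp (z * x) - 1 - z * x * (if x < 1 then 1 else 0)) *
        lampertiStableDensity α β x =
      z * (lampertiDrift α β + 1 / (α - 1)) +
        Gamma (-α) * (Gamma (-z + α + 1 - β) / Gamma (-z + 1 - β) -
          Gamma (α + 1 - β) / Gamma (1 - β)) := by
  have hb : -2 < (-α).re := by rw [neg_re]; linarith
  obtain ⟨integrable_s, integral_s⟩ := integrableOn_and_integral_expRemainder hb
    (neg_ne_zero.2 hα₀) (neg_injective.ne hα₁) (s := -z + α + 1 - β)
    (by simp only [sub_re, add_re, neg_re, one_re]; linarith)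
  obtain ⟨integrable_c, integral_c⟩ := integrableOn_and_integral_expRemainder hb
    (neg_ne_zero.2 hα₀) (neg_injective.ne hα₁) (s := α + 1 - β)
    (by simp only [sub_re, add_re, one_re]; linarith)
  have integrable_sub := integrable_s.sub integrable_c
  rw [Pi.sub_def] at integrable_sub
  rw [setIntegral_congr_fun measurableSet_Ioi fun x hx ↦
      compensated_exp_mul_lampertiStableDensity z hx,
    integral_add integrable_sub ((integrableOn_compensatorDefect hα).const_mul z),
    integral_sub integrable_s integrable_c, integral_s, integral_c, integral_const_mul,
    integral_compensatorDefect hα, show -α + (-z + α + 1 - β) = -z + 1 - β by ring,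
    show -α + (α + 1 - β) = 1 - β by ring]
  have : α - 1 ≠ 0 := sub_ne_zero.2 hα₁
  have : -α + 1 ≠ 0 := by rwa [neg_add_eq_sub, sub_ne_zero, ne_comm]
  field_simp
  ring

end LampertiStable

section RealParameters

theorem ofReal_one_sub_exp_neg_rpow {x : ℝ} (hx : 0 < x) (p : ℝ) :
    (((1 - Real.exp (-x)) ^ p : ℝ) : ℂ) = (1 - Complex.exp (-x)) ^ (p : ℂ) := by
  rw [Complex.ofReal_cpow (one_sub_exp_neg_pos hx).le]
  push_cast
  rfl

theorem lampertiDrift_ofReal (α β : ℝ) :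
    lampertiDrift α β =
      (((∫ x in (0 : ℝ)..1,
          x * Real.exp (-x) * (1 - Real.exp (-(α - β) * x)) / (1 - Real.exp (-x)) ^ (α + 1)) +
        (∫ x in (0 : ℝ)..1,
          Real.exp (-x) * (1 - x - Real.exp (-x)) / (1 - Real.exp (-x)) ^ (α + 1)) +
        ∫ x in Ioi (1 : ℝ), Real.exp (-x) / (1 - Real.exp (-x)) ^ α : ℝ) : ℂ) := by
  simp only [lampertiDrift, Complex.ofReal_add, intervalIntegral.integral_of_le zero_le_one,
    ← integral_complex_ofReal]
  congr 1
  · congr 1 <;> refine setIntegral_congr_fun measurableSet_Ioc fun x hx ↦ ?_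
    all_goals simp [ofReal_one_sub_exp_neg_rpow hx.1]
  · refine setIntegral_congr_fun measurableSet_Ioi fun x (hx : 1 < x) ↦ ?_
    simp [ofReal_one_sub_exp_neg_rpow (one_pos.trans hx)]

theorem lampertiStableDensity_ofReal {x : ℝ} (hx : 0 < x) (α β : ℝ) :
    lampertiStableDensity α β x =
      ((Real.exp (β * x) * (Real.exp x - 1) ^ (-(α + 1)) : ℝ) : ℂ) := by
  rw [lampertiStableDensity, Complex.ofReal_mul,
    Complex.ofReal_cpow (sub_nonneg.2 (Real.one_le_exp hx.le))]
  push_cast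
  rfl

end RealParameters

theorem lamperti_stable_characteristic_exponent_large_index
    (α β l a : ℝ) (hα : α ∈ Set.Ioo (1:ℝ) 2) (hβ : β < α + 1)
    (ha : a =
      (∫ x in (0:ℝ)..1,
          x * Real.exp (-x) * (1 - Real.exp (-(α - β) * x)) / (1 - Real.exp (-x)) ^ (α + 1))
        + (∫ x in (0:ℝ)..1,
            Real.exp (-x) * (1 - x - Real.exp (-x)) / (1 - Real.exp (-x)) ^ (α + 1))
        + ∫ x in Set.Ioi (1:ℝ), Real.exp (-x) / (1 - Real.exp (-x)) ^ α) :
    ∫ x in Set.Ioi (0:ℝ),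
        (Complex.exp (Complex.I * l * x) - 1 - Complex.I * l * x * (if x < 1 then 1 else 0)) *
          ((Real.exp (β * x) * (Real.exp x - 1) ^ (-(α + 1)) : ℝ) : ℂ)
      = Complex.I * l * (a + 1 / (α - 1)) +
          Complex.Gamma (-α) *
            (Complex.Gamma (-(Complex.I * l) + α + 1 - β) /
                Complex.Gamma (-(Complex.I * l) + 1 - β)
              - Complex.Gamma (α + 1 - β) / Complex.Gamma (1 - β)) := by
  rw [ha, ← lampertiDrift_ofReal,
    ← lamperti_stable_characteristic_exponent_large_index_general (z := Complex.I * l)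
      (by simpa using hα.2) (mod_cast (one_pos.trans hα.1).ne') (mod_cast hα.1.ne')
      (by simpa using hβ) (by simpa using hβ)]
  exact setIntegral_congr_fun measurableSet_Ioi fun x hx ↦ by rw [lampertiStableDensity_ofReal hx]
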